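/- arXiv:1209.1322 — 2 statements merged into one kernel-verified Lean document; each statement's English description precedes it below -/
import Mathlib

section
/- Let g be a real-valued query on datasets and suppose its global sensitivity is at most Δ, i.e., |g(D) − g(D′)| ≤ Δ for every pair of neighboring datasets D ≃ D′. Fix ε > 0 and let the mechanism A_g(D) output g(D) + Lap(Δ/ε), i.e., on input D it outputs a sample from the distribution on ℝ with density x ↦ (ε/(2Δ))·exp(−ε|x − g(D)|/Δ). Then A_g satisfies ε-differential privacy: for every pair of neighboring datasets D ≃ D′ and every measurable set S ⊆ ℝ, Pr[A_g(D) ∈ S] ≤ e^ε · Pr[A_g(D′) ∈ S]. -/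
/-!
At every output `x`, the triangle inequality gives `|x - g D'| ≤ |x - g D| + Δ`, so the two Laplace
densities satisfy `f_D x ≤ exp ε * f_D' x` pointwise. Integrating over `S` gives the privacy bound.
-/

open MeasureTheory

/-- Two datasets (finite multisets of records) are neighbors if one equals the
other with one additional record added. -/
def Neighbor {T : Type*} (D D' : Multiset T) : Prop :=
  (∃ r : T, D' = r ::ₘ D) ∨ (∃ r : T, D = r ::ₘ D')

/-- The Laplace mechanism for a real-valued query `g` of global sensitivity at
most `Δ`, which adds `Lap (Δ/ε)` noise to `g D`, satisfies `ε`-differential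
privacy. -/
theorem laplace_mechanism_dp {T : Type*} (g : Multiset T → ℝ) (Δ ε : ℝ)
    (hΔ : 0 < Δ) (hε : 0 < ε)
    (hsens : ∀ D D' : Multiset T, Neighbor D D' → |g D - g D'| ≤ Δ)
    (A : Multiset T → Measure ℝ)
    (hA : ∀ D : Multiset T,
      A D = volume.withDensity
        (fun x => ENNReal.ofReal ((ε / (2 * Δ)) * Real.exp (-(ε * |x - g D|) / Δ)))) :
    ∀ D D' : Multiset T, Neighbor D D' → ∀ S : Set ℝ, MeasurableSet S →
      A D S ≤ ENNReal.ofReal (Real.exp ε) * A D' S := by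
  intro D D' hN S hS
  have hd := hsens D D' hN
  rw [hA D, hA D', withDensity_apply _ hS, withDensity_apply _ hS,
    ← lintegral_const_mul' _ _ ENNReal.ofReal_ne_top]
  refine lintegral_mono fun x => ?_
  rw [← ENNReal.ofReal_mul (Real.exp_pos ε).le, mul_left_comm, ← Real.exp_add]
  have htri : |x - g D'| ≤ |x - g D| + Δ := (abs_sub_le x (g D) (g D')).trans (by gcongr)
  have hexp : -(ε * |x - g D|) / Δ ≤ ε + -(ε * |x - g D'|) / Δ := by
    rw [div_le_iff₀ hΔ, add_mul, div_mul_cancel₀ _ hΔ.ne']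
    nlinarith [mul_le_mul_of_nonneg_left htri hε.le]
  gcongr
end

section
/- Let g be a query mapping datasets to ℝ^k with L₁ global sensitivity at most Δ, i.e., Σ_{i=1}^k |g(D)_i − g(D′)_i| ≤ Δ for every pair of neighboring datasets D ≃ D′. Fix ε > 0 and let the mechanism A_g(D) output g(D) + (Y₁, …, Y_k) where Y₁, …, Y_k are i.i.d. Lap(Δ/ε), i.e., on input D the output distribution on ℝ^k has density x ↦ ∏_{i=1}^k (ε/(2Δ))·exp(−ε|x_i − g(D)_i|/Δ). Then A_g satisfies ε-differential privacy: for every pair of neighboring datasets D ≃ D′ and every measurable set S ⊆ ℝ^k, Pr[A_g(D) ∈ S] ≤ e^ε · Pr[A_g(D′) ∈ S]. -/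
/-!
The output densities at neighboring datasets compare pointwise: the product of one-dimensional
Laplace densities centred at `g D` is a constant times `exp (-(ε / Δ) * ‖x - g D‖₁)`, and by the
triangle inequality `‖x - g D'‖₁ ≤ ‖x - g D‖₁ + Δ`, so replacing `D` by `D'` decreases the density
by a factor of at most `exp ε`. Integrating this inequality over `S` gives the claim.
-/

open MeasureTheory

/-- The vector Laplace mechanism: for a query `g : datasets → ℝ^k` with `L₁`
global sensitivity at most `Δ`, adding i.i.d. `Lap (Δ/ε)` noise to each
coordinate of `g D` satisfies `ε`-differential privacy. -/
theorem laplace_vector_mechanism_dp {T : Type*} (k : ℕ)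
    (g : Multiset T → (Fin k → ℝ)) (Δ ε : ℝ) (hΔ : 0 < Δ) (hε : 0 < ε)
    (hsens : ∀ D D' : Multiset T, Neighbor D D' →
      (∑ i, |g D i - g D' i|) ≤ Δ)
    (A : Multiset T → Measure (Fin k → ℝ))
    (hA : ∀ D : Multiset T,
      A D = volume.withDensity
        (fun x => ENNReal.ofReal
          (∏ i, (ε / (2 * Δ)) * Real.exp (-(ε * |x i - g D i|) / Δ)))) :
    ∀ D D' : Multiset T, Neighbor D D' → ∀ S : Set (Fin k → ℝ), MeasurableSet S →
      A D S ≤ ENNReal.ofReal (Real.exp ε) * A D' S := by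
  intro D D' hDD' S hS
  rw [hA D, hA D', withDensity_apply _ hS, withDensity_apply _ hS,
    ← lintegral_const_mul' _ _ ENNReal.ofReal_ne_top]
  refine lintegral_mono fun x => ?_
  rw [← ENNReal.ofReal_mul (Real.exp_pos ε).le]
  refine ENNReal.ofReal_le_ofReal ?_
  rw [Finset.prod_mul_distrib, Finset.prod_mul_distrib, ← Real.exp_sum, ← Real.exp_sum,
    mul_left_comm, ← Real.exp_add]
  gcongr
  have hpt : ∑ i, |x i - g D' i| ≤ ∑ i, |x i - g D i| + Δ :=
    calc ∑ i, |x i - g D' i| ≤ ∑ i, (|x i - g D i| + |g D i - g D' i|) :=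
          Finset.sum_le_sum fun i _ => abs_sub_le _ _ _
      _ ≤ ∑ i, |x i - g D i| + Δ := by
          rw [Finset.sum_add_distrib]
          linarith [hsens D D' hDD']
  rw [← Finset.sum_div, ← Finset.sum_div, Finset.sum_neg_distrib, Finset.sum_neg_distrib,
    ← Finset.mul_sum, ← Finset.mul_sum]
  calc -(ε * ∑ i, |x i - g D i|) / Δ ≤ (ε * Δ - ε * ∑ i, |x i - g D' i|) / Δ := by
        gcongr
        nlinarith [mul_le_mul_of_nonneg_left hpt hε.le]
    _ = ε + -(ε * ∑ i, |x i - g D' i|) / Δ := by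
        field_simp
        ring
end
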